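/- arXiv:1508.07613 — 2 statements merged into one kernel-verified Lean document; each statement's English description precedes it below -/
import Mathlib

section
/- Let α ∈ (0,1/2) and let ω : ℝ×(0,∞) → ℝ be measurable, odd in x1, and satisfy 0 ≤ ω ≤ 1 on D⁺. Then for every x = (x1,x2) in the closure of D⁺ with x1 ≤ x2, one has ∫_{(0,x1)×(0,∞)} K2(x,y) ω(y) dy ≥ −(1/α)·(1/(1−2α) − 2^{−α})·x2^{1−2α}. -/
open MeasureTheory

noncomputable section

/-- Euclidean distance between points of `ℝ²` written as pairs. -/
def edist2 (p q : ℝ × ℝ) : ℝ := Real.sqrt ((p.1 - q.1) ^ 2 + (p.2 - q.2) ^ 2)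

/-- The open quadrant `D⁺ = (0,∞) × (0,∞)`. -/
def Dplus : Set (ℝ × ℝ) := Set.Ioi 0 ×ˢ Set.Ioi 0

/-- `K1(x,y) = (y₂-x₂)/|x-y|^{2+2α} - (y₂-x₂)/|x-ỹ|^{2+2α}
  - (y₂+x₂)/|x+y|^{2+2α} + (y₂+x₂)/|x-ȳ|^{2+2α}`, where `ỹ = (-y₁,y₂)`, `ȳ = (y₁,-y₂)`. -/
def K1 (α : ℝ) (x y : ℝ × ℝ) : ℝ :=
  (y.2 - x.2) / edist2 x y ^ (2 + 2 * α)
  - (y.2 - x.2) / edist2 x (-y.1, y.2) ^ (2 + 2 * α)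
  - (y.2 + x.2) / edist2 x (-y.1, -y.2) ^ (2 + 2 * α)
  + (y.2 + x.2) / edist2 x (y.1, -y.2) ^ (2 + 2 * α)

/-- `K2(x,y) = (y₁-x₁)/|x-y|^{2+2α} + (y₁+x₁)/|x-ỹ|^{2+2α}
  - (y₁+x₁)/|x+y|^{2+2α} - (y₁-x₁)/|x-ȳ|^{2+2α}`, where `ỹ = (-y₁,y₂)`, `ȳ = (y₁,-y₂)`. -/
def K2 (α : ℝ) (x y : ℝ × ℝ) : ℝ :=
  (y.1 - x.1) / edist2 x y ^ (2 + 2 * α)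
  + (y.1 + x.1) / edist2 x (-y.1, y.2) ^ (2 + 2 * α)
  - (y.1 + x.1) / edist2 x (-y.1, -y.2) ^ (2 + 2 * α)
  - (y.1 - x.1) / edist2 x (y.1, -y.2) ^ (2 + 2 * α)

/-!
Pairing each vortex with its mirror image across the `x₁`-axis gives
`K2 x y = H (x₁ + y₁) y₂ - H (x₁ - y₁) y₂` with `H ≥ 0`, so only the second term can make the
integral negative. For fixed `u = x₁ - y₁`, the integral of `H u` over `y₂ > 0` telescopes to at
most `∫ v in 0..x₂, 2 * u / (u ^ 2 + v ^ 2) ^ (1 + α)`. After exchanging the integrals, the one over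
`u ∈ (0, x₁)` is elementary and equals `(v ^ (-2α) - (x₁ ^ 2 + v ^ 2) ^ (-α)) / α`. Since
`x₁ ≤ x₂`, we may replace `x₁ ^ 2 + v ^ 2` by `2 * x₂ ^ 2`, and integrating over `v ∈ (0, x₂)`
gives the constant.
-/

open Set Filter

section Shifts

variable {f : ℝ → ℝ} {c : ℝ}

lemma ofReal_intervalIntegral_eq_lintegral {a b : ℝ} (hab : a ≤ b)
    (hint : IntervalIntegrable f volume a b) (hnonneg : ∀ t ∈ Ioc a b, 0 ≤ f t) :
    ENNReal.ofReal (∫ t in a..b, f t) = ∫⁻ t in Ioc a b, ENNReal.ofReal (f t) := by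
  rw [intervalIntegral.integral_of_le hab]
  exact ofReal_integral_eq_lintegral_ofReal
    ((intervalIntegrable_iff_integrableOn_Ioc_of_le hab).1 hint)
    (ae_restrict_of_forall_mem measurableSet_Ioc hnonneg)

lemma intervalIntegrable_comp_add_right (hint : ∀ a b, IntervalIntegrable f volume a b)
    (a b c : ℝ) : IntervalIntegrable (fun t => f (t + c)) volume a b := by
  simpa only [add_sub_cancel_right] using (hint (a + c) (b + c)).comp_add_right c

lemma intervalIntegrable_comp_sub_right (hint : ∀ a b, IntervalIntegrable f volume a b)
    (a b c : ℝ) : IntervalIntegrable (fun t => f (t - c)) volume a b :=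
  intervalIntegrable_comp_add_right hint a b (-c)

lemma integral_comp_sub_sub_comp_add (hint : ∀ a b, IntervalIntegrable f volume a b) (a b c : ℝ) :
    ∫ t in a..b, (f (t - c) - f (t + c))
      = (∫ t in a - c..a + c, f t) - ∫ t in b - c..b + c, f t := by
  rw [intervalIntegral.integral_sub (intervalIntegrable_comp_sub_right hint a b c)
      (intervalIntegrable_comp_add_right hint a b c),
    intervalIntegral.integral_comp_sub_right, intervalIntegral.integral_comp_add_right,
    intervalIntegral.integral_interval_sub_interval_comm (hint _ _) (hint _ _) (hint _ _)]

lemma integral_symm_eq_of_even (hint : IntervalIntegrable f volume 0 c) (heven : f.Even) :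
    ∫ t in -c..c, f t = ∫ t in 0..c, 2 * f t := by
  have hint' : IntervalIntegrable f volume (-c) 0 := by
    simpa [heven _] using (IntervalIntegrable.iff_comp_neg (by finiteness)).1 hint |>.symm
  have hreflect : ∫ t in -c..0, f t = ∫ t in 0..c, f t := by
    simpa [heven _] using (intervalIntegral.integral_comp_neg (a := 0) (b := c) f).symm
  rw [← intervalIntegral.integral_add_adjacent_intervals hint' hint, hreflect,
    intervalIntegral.integral_const_mul, two_mul]

/- On `(0, N)` the two shifts telescope to `∫ t in -c..c, f t` minus a nonnegative remainder near
`N`, so no decay of `f` at infinity is involved. -/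
lemma lintegral_Ioi_comp_sub_sub_comp_add_le (hc : 0 ≤ c)
    (hint : ∀ a b, IntervalIntegrable f volume a b) (heven : f.Even) (hnonneg : ∀ t, 0 ≤ f t)
    (hmono : ∀ t, 0 < t → f (t + c) ≤ f (t - c)) :
    ∫⁻ t in Ioi (0 : ℝ), ENNReal.ofReal (f (t - c) - f (t + c))
      ≤ ∫⁻ t in Ioc 0 c, ENNReal.ofReal (2 * f t) := by
  have hint' (N : ℝ) : IntervalIntegrable (fun t => f (t - c) - f (t + c)) volume 0 N :=
    (intervalIntegrable_comp_sub_right hint 0 N c).sub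
      (intervalIntegrable_comp_add_right hint 0 N c)
  have hcover : AECover (volume.restrict (Ioi (0 : ℝ))) atTop Iic := aecover_Iic tendsto_id
  have htruncated (N : ℝ) (hN : 0 ≤ N) :
      ∫⁻ t in Ioc 0 N, ENNReal.ofReal (f (t - c) - f (t + c))
        ≤ ∫⁻ t in Ioc 0 c, ENNReal.ofReal (2 * f t) := by
    rw [← ofReal_intervalIntegral_eq_lintegral hN (hint' N)
        fun t ht => sub_nonneg.2 (hmono t ht.1),
      ← ofReal_intervalIntegral_eq_lintegral hc ((hint 0 c).const_mul 2)
        fun t _ => mul_nonneg zero_le_two (hnonneg t),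
      integral_comp_sub_sub_comp_add hint, zero_sub, zero_add,
      ← integral_symm_eq_of_even (hint 0 c) heven]
    exact ENNReal.ofReal_le_ofReal (sub_le_self _
      (intervalIntegral.integral_nonneg_of_forall (by linarith) hnonneg))
  have hrestrict (N : ℝ) : (volume.restrict (Ioi (0 : ℝ))).restrict (Iic N)
      = volume.restrict (Ioc 0 N) := by
    rw [Measure.restrict_restrict measurableSet_Iic, inter_comm, Ioi_inter_Iic]
  have hmeas : AEMeasurable (fun t => f (t - c) - f (t + c)) (volume.restrict (Ioi 0)) :=
    hcover.aemeasurable fun N => by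
      rw [hrestrict]
      exact (hint' N).1.aemeasurable
  refine le_of_tendsto (hcover.lintegral_tendsto_of_countably_generated hmeas.ennreal_ofReal)
    ((eventually_ge_atTop 0).mono fun N hN => ?_)
  rw [hrestrict]
  exact htruncated N hN

end Shifts

section Powers

variable {α : ℝ}

lemma rpow_neg_div_antitoneOn (α : ℝ) : AntitoneOn (fun s : ℝ => s ^ (-α) / α) (Ioi 0) := by
  intro s hs t _ hst
  have hs' : 0 < s := hs
  rcases le_total α 0 with hα | hα
  · exact div_le_div_of_nonpos_of_le hα (Real.rpow_le_rpow hs'.le hst (neg_nonneg.2 hα))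
  · exact div_le_div_of_nonneg_right (Real.rpow_le_rpow_of_nonpos hs' hst (neg_nonpos.2 hα)) hα

lemma sq_rpow_neg {v : ℝ} (hv : 0 ≤ v) (α : ℝ) : (v ^ 2) ^ (-α) = v ^ (-(2 * α)) := by
  rw [← Real.rpow_natCast_mul hv]
  norm_num

lemma rpow_neg_div_sub_nonneg (α b : ℝ) {v : ℝ} (hv : 0 < v) :
    0 ≤ v ^ (-(2 * α)) / α - (b ^ 2 + v ^ 2) ^ (-α) / α := by
  rw [← sq_rpow_neg hv.le]
  have hpos : 0 < v ^ 2 := by positivity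
  have hle : v ^ 2 ≤ b ^ 2 + v ^ 2 := by linarith [sq_nonneg b]
  exact sub_nonneg.2 (rpow_neg_div_antitoneOn α hpos (hpos.trans_le hle) hle)

lemma intervalIntegrable_rpow_neg_div_sub (hα : α < 1 / 2) (b : ℝ) {c : ℝ} (hc : 0 ≤ c) :
    IntervalIntegrable (fun v => v ^ (-(2 * α)) / α - (b ^ 2 + v ^ 2) ^ (-α) / α) volume 0 c := by
  have hpow : IntervalIntegrable (fun v : ℝ => v ^ (-(2 * α))) volume 0 c :=
    intervalIntegral.intervalIntegrable_rpow' (by linarith)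
  refine (hpow.div_const α).sub (IntervalIntegrable.div_const ?_ α)
  rcases eq_or_ne b 0 with rfl | hb
  · refine hpow.congr fun v hv => ?_
    rw [uIoc_of_le hc] at hv
    rw [zero_pow two_ne_zero, zero_add, sq_rpow_neg hv.1.le]
  · have hcont : Continuous fun v : ℝ => (b ^ 2 + v ^ 2) ^ (-α) :=
      .rpow_const (by fun_prop) fun v => Or.inl (by positivity)
    exact hcont.intervalIntegrable 0 c

lemma integral_rpow_neg_div_sub_le (hα : α < 1 / 2) {b c : ℝ} (hb : 0 ≤ b) (hbc : b ≤ c) :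
    ∫ v in 0..c, (v ^ (-(2 * α)) / α - (b ^ 2 + v ^ 2) ^ (-α) / α)
      ≤ 1 / α * (1 / (1 - 2 * α) - 2 ^ (-α)) * c ^ (1 - 2 * α) := by
  have hc : 0 ≤ c := hb.trans hbc
  have hpow : IntervalIntegrable (fun v : ℝ => v ^ (-(2 * α))) volume 0 c :=
    intervalIntegral.intervalIntegrable_rpow' (by linarith)
  have hexp : 0 < 1 - 2 * α := by linarith
  have hsq : c * (2 * c ^ 2) ^ (-α) = 2 ^ (-α) * c ^ (1 - 2 * α) := by
    rw [Real.mul_rpow zero_le_two (sq_nonneg c), sq_rpow_neg hc, sub_eq_add_neg,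
      Real.rpow_add' hc (by linarith), Real.rpow_one]
    ring
  calc ∫ v in 0..c, (v ^ (-(2 * α)) / α - (b ^ 2 + v ^ 2) ^ (-α) / α)
      ≤ ∫ v in 0..c, (v ^ (-(2 * α)) / α - (2 * c ^ 2) ^ (-α) / α) := by
        refine intervalIntegral.integral_mono_on_of_le_Ioo hc
          (intervalIntegrable_rpow_neg_div_sub hα b hc)
          ((hpow.div_const α).sub intervalIntegrable_const)
          fun v hv => ?_
        have hpos : 0 < b ^ 2 + v ^ 2 := by nlinarith [hv.1]
        have hle : b ^ 2 + v ^ 2 ≤ 2 * c ^ 2 := by nlinarith [hv.1, hv.2]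
        exact sub_le_sub_left (rpow_neg_div_antitoneOn α hpos (hpos.trans_le hle) hle) _
    _ = c ^ (1 - 2 * α) / (1 - 2 * α) / α - c * (2 * c ^ 2) ^ (-α) / α := by
        rw [intervalIntegral.integral_sub (hpow.div_const α) intervalIntegrable_const,
          intervalIntegral.integral_div, integral_rpow (Or.inl (by linarith)),
          intervalIntegral.integral_const, neg_add_eq_sub, Real.zero_rpow hexp.ne', sub_zero,
          sub_zero, smul_eq_mul, mul_div_assoc]
    _ = 1 / α * (1 / (1 - 2 * α) - 2 ^ (-α)) * c ^ (1 - 2 * α) := by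
        rw [hsq]
        ring

end Powers

/-- The `u`-component of the planar field `z / |z| ^ (2 + 2 * α)` at `z = (u, v)`: up to rotation
and a constant, the velocity at the origin induced by a point vortex at `z` in the generalised
surface quasi-geostrophic equation. -/
def gsqgKernel (α u v : ℝ) : ℝ := u / (u ^ 2 + v ^ 2) ^ (1 + α)

/-- The `gsqgKernel` of a vortex at height `y` minus that of its mirror image at height `-y`, both
at horizontal distance `u` from an observer at height `c`. The second term has `y + c` in place of
`-y - c` because `gsqgKernel` is even in its last argument. -/
def halfPlaneKernel (α c u y : ℝ) : ℝ := gsqgKernel α u (y - c) - gsqgKernel α u (y + c)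

section Kernel

variable {α : ℝ}

lemma gsqgKernel_even (α u : ℝ) : (gsqgKernel α u).Even := fun v => by
  simp only [gsqgKernel, neg_sq]

lemma gsqgKernel_nonneg {u : ℝ} (hu : 0 ≤ u) (v : ℝ) : 0 ≤ gsqgKernel α u v := by
  unfold gsqgKernel
  positivity

lemma gsqgKernel_le_of_sq_le (hα : -1 ≤ α) {u v w : ℝ} (hu : 0 < u) (h : v ^ 2 ≤ w ^ 2) :
    gsqgKernel α u w ≤ gsqgKernel α u v := by
  have : 0 ≤ 1 + α := by linarith
  unfold gsqgKernel
  gcongr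

@[fun_prop]
lemma measurable_gsqgKernel {X : Type*} [MeasurableSpace X] {f g : X → ℝ} (hf : Measurable f)
    (hg : Measurable g) : Measurable fun x => gsqgKernel α (f x) (g x) := by
  unfold gsqgKernel
  fun_prop

@[fun_prop]
lemma measurable_halfPlaneKernel {X : Type*} [MeasurableSpace X] {c : ℝ} {f g : X → ℝ}
    (hf : Measurable f) (hg : Measurable g) :
    Measurable fun x => halfPlaneKernel α c (f x) (g x) := by
  unfold halfPlaneKernel
  fun_prop

lemma continuous_gsqgKernel_left {v : ℝ} (hv : v ≠ 0) : Continuous fun u => gsqgKernel α u v := by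
  unfold gsqgKernel
  refine continuous_id.div (.rpow_const (by fun_prop) fun u => Or.inl ?_) fun u => ?_ <;> positivity

lemma continuous_gsqgKernel_right {u : ℝ} (hu : u ≠ 0) : Continuous (gsqgKernel α u) := by
  unfold gsqgKernel
  refine continuous_const.div (.rpow_const (by fun_prop) fun v => Or.inl ?_) fun v => ?_ <;>
    positivity

lemma integral_gsqgKernel_left (hα : α ≠ 0) {v : ℝ} (hv : v ≠ 0) (a b : ℝ) :
    ∫ u in a..b, 2 * gsqgKernel α u v
      = (a ^ 2 + v ^ 2) ^ (-α) / α - (b ^ 2 + v ^ 2) ^ (-α) / α := by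
  have hderiv (u : ℝ) : HasDerivAt (fun u => -((u ^ 2 + v ^ 2) ^ (-α) / α))
      (2 * gsqgKernel α u v) u := by
    have hpos : 0 < u ^ 2 + v ^ 2 := by positivity
    refine (((((hasDerivAt_pow 2 u).add_const (v ^ 2)).rpow_const
      (p := -α) (Or.inl hpos.ne')).div_const α).neg).congr_deriv ?_
    rw [gsqgKernel, show -α - 1 = -(1 + α) by ring, Real.rpow_neg hpos.le]
    simp only [Nat.cast_ofNat, Nat.add_one_sub_one, pow_one, mul_neg, neg_mul]
    field_simp
  rw [intervalIntegral.integral_eq_sub_of_hasDerivAt (fun u _ => hderiv u)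
    (((continuous_gsqgKernel_left hv).const_mul 2).intervalIntegrable _ _)]
  ring

lemma halfPlaneKernel_nonneg (hα : -1 ≤ α) {c u y : ℝ} (hc : 0 ≤ c) (hu : 0 < u) (hy : 0 ≤ y) :
    0 ≤ halfPlaneKernel α c u y :=
  sub_nonneg.2 (gsqgKernel_le_of_sq_le hα hu (by nlinarith))

lemma lintegral_halfPlaneKernel_right_le (hα : -1 ≤ α) {c u : ℝ} (hc : 0 ≤ c) (hu : 0 < u) :
    ∫⁻ y in Ioi (0 : ℝ), ENNReal.ofReal (halfPlaneKernel α c u y)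
      ≤ ∫⁻ v in Ioc 0 c, ENNReal.ofReal (2 * gsqgKernel α u v) :=
  lintegral_Ioi_comp_sub_sub_comp_add_le hc
    (fun _ _ => (continuous_gsqgKernel_right hu.ne').intervalIntegrable _ _)
    (gsqgKernel_even α u) (gsqgKernel_nonneg hu.le)
    fun _ hy => sub_nonneg.1 (halfPlaneKernel_nonneg hα hc hu hy.le)

lemma lintegral_gsqgKernel_left (hα : α ≠ 0) {b v : ℝ} (hb : 0 ≤ b) (hv : 0 < v) :
    ∫⁻ u in Ioo 0 b, ENNReal.ofReal (2 * gsqgKernel α u v)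
      = ENNReal.ofReal (v ^ (-(2 * α)) / α - (b ^ 2 + v ^ 2) ^ (-α) / α) := by
  rw [setLIntegral_congr Ioo_ae_eq_Ioc, ← ofReal_intervalIntegral_eq_lintegral hb
      (((continuous_gsqgKernel_left hv.ne').const_mul 2).intervalIntegrable _ _)
      fun u hu => mul_nonneg zero_le_two (gsqgKernel_nonneg hu.1.le v),
    integral_gsqgKernel_left hα hv.ne', zero_pow two_ne_zero, zero_add, sq_rpow_neg hv.le]

lemma lintegral_halfPlaneKernel_strip_le (hα : α ∈ Ico (-1) (1 / 2)) (hα₀ : α ≠ 0) {b c : ℝ}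
    (hb : 0 ≤ b) (hc : 0 ≤ c) :
    ∫⁻ p in Ioo 0 b ×ˢ Ioi 0, ENNReal.ofReal (halfPlaneKernel α c p.1 p.2)
      ≤ ENNReal.ofReal (∫ v in 0..c, (v ^ (-(2 * α)) / α - (b ^ 2 + v ^ 2) ^ (-α) / α)) := by
  calc ∫⁻ p in Ioo 0 b ×ˢ Ioi 0, ENNReal.ofReal (halfPlaneKernel α c p.1 p.2)
      = ∫⁻ u in Ioo 0 b, ∫⁻ y in Ioi 0, ENNReal.ofReal (halfPlaneKernel α c u y) := by
        rw [Measure.volume_eq_prod, setLIntegral_prod _ (by fun_prop)]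
    _ ≤ ∫⁻ u in Ioo 0 b, ∫⁻ v in Ioc 0 c, ENNReal.ofReal (2 * gsqgKernel α u v) :=
        setLIntegral_mono' measurableSet_Ioo
          fun u hu => lintegral_halfPlaneKernel_right_le hα.1 hc hu.1
    _ = ∫⁻ v in Ioc 0 c, ∫⁻ u in Ioo 0 b, ENNReal.ofReal (2 * gsqgKernel α u v) :=
        lintegral_lintegral_swap (by fun_prop)
    _ = ∫⁻ v in Ioc 0 c, ENNReal.ofReal (v ^ (-(2 * α)) / α - (b ^ 2 + v ^ 2) ^ (-α) / α) :=
        setLIntegral_congr_fun measurableSet_Ioc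
          fun v hv => lintegral_gsqgKernel_left hα₀ hb hv.1
    _ = ENNReal.ofReal (∫ v in 0..c, (v ^ (-(2 * α)) / α - (b ^ 2 + v ^ 2) ^ (-α) / α)) :=
        (ofReal_intervalIntegral_eq_lintegral hc
          (intervalIntegrable_rpow_neg_div_sub hα.2 b hc)
          fun v hv => rpow_neg_div_sub_nonneg α b hv.1).symm

lemma halfPlaneKernel_strip_ae_nonneg (hα : -1 ≤ α) {b c : ℝ} (hc : 0 ≤ c) :
    0 ≤ᵐ[volume.restrict (Ioo 0 b ×ˢ Ioi 0)] fun p => halfPlaneKernel α c p.1 p.2 :=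
  ae_restrict_of_forall_mem (measurableSet_Ioo.prod measurableSet_Ioi)
    fun _ hp => halfPlaneKernel_nonneg hα hc hp.1.1 (le_of_lt hp.2)

lemma integrableOn_halfPlaneKernel (hα : α ∈ Ico (-1) (1 / 2)) (hα₀ : α ≠ 0) {b c : ℝ}
    (hb : 0 ≤ b) (hc : 0 ≤ c) :
    IntegrableOn (fun p : ℝ × ℝ => halfPlaneKernel α c p.1 p.2) (Ioo 0 b ×ˢ Ioi 0) :=
  (lintegral_ofReal_ne_top_iff_integrable (by fun_prop)
    (halfPlaneKernel_strip_ae_nonneg hα.1 hc)).1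
    (ne_top_of_le_ne_top ENNReal.ofReal_ne_top (lintegral_halfPlaneKernel_strip_le hα hα₀ hb hc))

lemma setIntegral_halfPlaneKernel_le (hα : α ∈ Ico (-1) (1 / 2)) (hα₀ : α ≠ 0) {b c : ℝ}
    (hb : 0 ≤ b) (hc : 0 ≤ c) :
    ∫ p in Ioo 0 b ×ˢ Ioi 0, halfPlaneKernel α c p.1 p.2
      ≤ ∫ v in 0..c, (v ^ (-(2 * α)) / α - (b ^ 2 + v ^ 2) ^ (-α) / α) := by
  rw [integral_eq_lintegral_of_nonneg_ae (halfPlaneKernel_strip_ae_nonneg hα.1 hc) (by fun_prop)]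
  refine ENNReal.toReal_le_of_le_ofReal ?_ (lintegral_halfPlaneKernel_strip_le hα hα₀ hb hc)
  rw [intervalIntegral.integral_of_le hc]
  exact setIntegral_nonneg measurableSet_Ioc fun v hv => rpow_neg_div_sub_nonneg α b hv.1

end Kernel

section ProdMap

variable {X X' Y E : Type*} [MeasurableSpace X] [MeasurableSpace X'] [MeasurableSpace Y]
  [NormedAddCommGroup E] {μ : Measure X} {μ' : Measure X'} {ν : Measure Y}
  [SFinite μ] [SFinite ν] {g : X → X'}

lemma integrableOn_comp_prodMap_left (hg : MeasurePreserving g μ μ') (hemb : MeasurableEmbedding g)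
    (f : X' × Y → E) (s : Set X') (t : Set Y) :
    IntegrableOn (fun p => f (g p.1, p.2)) ((g ⁻¹' s) ×ˢ t) (μ.prod ν)
      ↔ IntegrableOn f (s ×ˢ t) (μ'.prod ν) :=
  (hg.prod (.id ν)).integrableOn_comp_preimage (hemb.prodMap .id) (f := f) (s := s ×ˢ t)

lemma setIntegral_comp_prodMap_left [NormedSpace ℝ E] (hg : MeasurePreserving g μ μ')
    (hemb : MeasurableEmbedding g) (f : X' × Y → E) (s : Set X') (t : Set Y) :
    ∫ p in (g ⁻¹' s) ×ˢ t, f (g p.1, p.2) ∂μ.prod ν = ∫ p in s ×ˢ t, f p ∂μ'.prod ν :=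
  (hg.prod (.id ν)).setIntegral_preimage_emb (hemb.prodMap .id) f (s ×ˢ t)

end ProdMap

section ShiftedStrip

variable {α : ℝ}

lemma integrableOn_halfPlaneKernel_sub (hα : α ∈ Ico (-1) (1 / 2)) (hα₀ : α ≠ 0) {b c : ℝ}
    (hb : 0 ≤ b) (hc : 0 ≤ c) :
    IntegrableOn (fun y : ℝ × ℝ => halfPlaneKernel α c (b - y.1) y.2) (Ioo 0 b ×ˢ Ioi 0) := by
  have hreflect := (integrableOn_comp_prodMap_left (volume.measurePreserving_sub_left b)
    (MeasurableEquiv.subLeft b).measurableEmbedding _ (Ioo 0 b) (Ioi 0)).2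
    (integrableOn_halfPlaneKernel hα hα₀ hb hc)
  rwa [preimage_const_sub_Ioo, sub_self, sub_zero] at hreflect

lemma integrableOn_halfPlaneKernel_add (hα : α ∈ Ico (-1) (1 / 2)) (hα₀ : α ≠ 0) {b c : ℝ}
    (hb : 0 ≤ b) (hc : 0 ≤ c) :
    IntegrableOn (fun y : ℝ × ℝ => halfPlaneKernel α c (b + y.1) y.2) (Ioo 0 b ×ˢ Ioi 0) := by
  have hshift := (integrableOn_comp_prodMap_left (measurePreserving_add_left volume b)
    (measurableEmbedding_addLeft b) _ (Ioo 0 (b + b)) (Ioi 0)).2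
    (integrableOn_halfPlaneKernel hα hα₀ (add_nonneg hb hb) hc)
  refine hshift.mono_set (prod_mono_left ?_)
  rw [preimage_const_add_Ioo, add_sub_cancel_right]
  exact Ioo_subset_Ioo_left (by linarith)

lemma setIntegral_halfPlaneKernel_sub_le (hα : α ∈ Ico (-1) (1 / 2)) (hα₀ : α ≠ 0) {b c : ℝ}
    (hb : 0 ≤ b) (hc : 0 ≤ c) :
    ∫ y in Ioo 0 b ×ˢ Ioi 0, halfPlaneKernel α c (b - y.1) y.2
      ≤ ∫ v in 0..c, (v ^ (-(2 * α)) / α - (b ^ 2 + v ^ 2) ^ (-α) / α) := by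
  have hreflect := setIntegral_comp_prodMap_left (volume.measurePreserving_sub_left b)
    (MeasurableEquiv.subLeft b).measurableEmbedding (ν := volume)
    (fun p => halfPlaneKernel α c p.1 p.2) (Ioo 0 b) (Ioi 0)
  rw [preimage_const_sub_Ioo, sub_self, sub_zero] at hreflect
  exact hreflect.trans_le (setIntegral_halfPlaneKernel_le hα hα₀ hb hc)

end ShiftedStrip

section K2

lemma edist2_rpow (p q : ℝ × ℝ) (α : ℝ) :
    edist2 p q ^ (2 + 2 * α) = ((p.1 - q.1) ^ 2 + (p.2 - q.2) ^ 2) ^ (1 + α) := by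
  rw [edist2, ← Real.rpow_div_two_eq_sqrt _ (by positivity)]
  ring_nf

lemma K2_eq_halfPlaneKernel_sub (α : ℝ) (x y : ℝ × ℝ) :
    K2 α x y = halfPlaneKernel α x.2 (x.1 + y.1) y.2 - halfPlaneKernel α x.2 (x.1 - y.1) y.2 := by
  simp only [K2, halfPlaneKernel, gsqgKernel, edist2_rpow, sub_neg_eq_add, sub_sq_comm x.2,
    add_comm x.2]
  ring

variable {α : ℝ} {x : ℝ × ℝ} {ω : ℝ × ℝ → ℝ}

lemma K2_mul_mem_Icc (hα : -1 ≤ α) (hx : 0 ≤ x.2) {y : ℝ × ℝ} (hy : y ∈ Ioo 0 x.1 ×ˢ Ioi 0)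
    {w : ℝ} (hw : w ∈ Icc 0 1) :
    K2 α x y * w ∈ Icc (-halfPlaneKernel α x.2 (x.1 - y.1) y.2)
      (halfPlaneKernel α x.2 (x.1 + y.1) y.2) := by
  obtain ⟨⟨hy₁, hyx⟩, hy₂⟩ := hy
  obtain ⟨hw₀, hw₁⟩ := hw
  have hsub := halfPlaneKernel_nonneg hα hx (sub_pos.2 hyx) (le_of_lt hy₂)
  have hadd := halfPlaneKernel_nonneg hα hx (add_pos (hy₁.trans hyx) hy₁) (le_of_lt hy₂)
  rw [K2_eq_halfPlaneKernel_sub]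
  constructor <;> nlinarith

lemma K2_mul_ae_mem_Icc (hα : -1 ≤ α) (hx : 0 ≤ x.2)
    (hω : ∀ y ∈ Ioo 0 x.1 ×ˢ Ioi 0, ω y ∈ Icc 0 1) :
    ∀ᵐ y ∂volume.restrict (Ioo 0 x.1 ×ˢ Ioi 0),
      K2 α x y * ω y ∈ Icc (-halfPlaneKernel α x.2 (x.1 - y.1) y.2)
        (halfPlaneKernel α x.2 (x.1 + y.1) y.2) :=
  ae_restrict_of_forall_mem (measurableSet_Ioo.prod measurableSet_Ioi)
    fun y hy => K2_mul_mem_Icc hα hx hy (hω y hy)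

lemma integrableOn_K2_mul (hα : α ∈ Ico (-1) (1 / 2)) (hα₀ : α ≠ 0) (hx : 0 ≤ x)
    (hmeas : AEStronglyMeasurable ω (volume.restrict (Ioo 0 x.1 ×ˢ Ioi 0)))
    (hω : ∀ y ∈ Ioo 0 x.1 ×ˢ Ioi 0, ω y ∈ Icc 0 1) :
    IntegrableOn (fun y => K2 α x y * ω y) (Ioo 0 x.1 ×ˢ Ioi 0) := by
  have hK2 : Measurable (K2 α x) := by
    simp only [funext (K2_eq_halfPlaneKernel_sub α x)]
    fun_prop
  have hbound := K2_mul_ae_mem_Icc hα.1 hx.2 hω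
  exact integrable_of_le_of_le (hK2.aestronglyMeasurable.mul hmeas)
    (hbound.mono fun _ h => h.1) (hbound.mono fun _ h => h.2)
    (integrableOn_halfPlaneKernel_sub hα hα₀ hx.1 hx.2).neg
    (integrableOn_halfPlaneKernel_add hα hα₀ hx.1 hx.2)

lemma neg_integral_le_setIntegral_K2_mul (hα : α ∈ Ico (-1) (1 / 2)) (hα₀ : α ≠ 0) (hx : 0 ≤ x)
    (hmeas : AEStronglyMeasurable ω (volume.restrict (Ioo 0 x.1 ×ˢ Ioi 0)))
    (hω : ∀ y ∈ Ioo 0 x.1 ×ˢ Ioi 0, ω y ∈ Icc 0 1) :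
    -∫ v in 0..x.2, (v ^ (-(2 * α)) / α - (x.1 ^ 2 + v ^ 2) ^ (-α) / α)
      ≤ ∫ y in Ioo 0 x.1 ×ˢ Ioi 0, K2 α x y * ω y := by
  calc -∫ v in 0..x.2, (v ^ (-(2 * α)) / α - (x.1 ^ 2 + v ^ 2) ^ (-α) / α)
      ≤ -∫ y in Ioo 0 x.1 ×ˢ Ioi 0, halfPlaneKernel α x.2 (x.1 - y.1) y.2 :=
        neg_le_neg (setIntegral_halfPlaneKernel_sub_le hα hα₀ hx.1 hx.2)
    _ = ∫ y in Ioo 0 x.1 ×ˢ Ioi 0, -halfPlaneKernel α x.2 (x.1 - y.1) y.2 :=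
        (integral_neg _).symm
    _ ≤ ∫ y in Ioo 0 x.1 ×ˢ Ioi 0, K2 α x y * ω y :=
        integral_mono_ae (integrableOn_halfPlaneKernel_sub hα hα₀ hx.1 hx.2).neg
          (integrableOn_K2_mul hα hα₀ hx hmeas hω)
          ((K2_mul_ae_mem_Icc hα.1 hx.2 hω).mono fun _ h => h.1)

end K2

theorem stmt4_general {α : ℝ} (hα : α ∈ Ico (-1) (1 / 2)) (hα₀ : α ≠ 0)
    {ω : ℝ × ℝ → ℝ} (hmeas : Measurable ω) (hbd : ∀ y ∈ Dplus, 0 ≤ ω y ∧ ω y ≤ 1)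
    {x : ℝ × ℝ} (hx : x ∈ closure Dplus) (hx12 : x.1 ≤ x.2) :
    IntegrableOn (fun y => K2 α x y * ω y) (Ioo 0 x.1 ×ˢ Ioi 0) ∧
      ∫ y in Ioo 0 x.1 ×ˢ Ioi 0, K2 α x y * ω y ≥
        -(1 / α * (1 / (1 - 2 * α) - 2 ^ (-α)) * x.2 ^ (1 - 2 * α)) := by
  have hx₀ : 0 ≤ x := by
    rw [Dplus, closure_prod_eq, closure_Ioi] at hx
    exact hx
  have hω : ∀ y ∈ Ioo 0 x.1 ×ˢ Ioi 0, ω y ∈ Icc 0 1 := fun y hy => hbd y ⟨hy.1.1, hy.2⟩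
  have hmeas' := hmeas.aestronglyMeasurable (μ := volume.restrict (Ioo 0 x.1 ×ˢ Ioi 0))
  exact ⟨integrableOn_K2_mul hα hα₀ hx₀ hmeas' hω,
    (neg_le_neg (integral_rpow_neg_div_sub_le hα.2 hx₀.1 hx12)).trans
      (neg_integral_le_setIntegral_K2_mul hα hα₀ hx₀ hmeas' hω)⟩

/-- For `α ∈ (0,1/2)` and `ω : ℝ×(0,∞) → ℝ` measurable, odd in `x₁`,
with `0 ≤ ω ≤ 1` on `D⁺`: for every `x` in the closure of `D⁺` with `x₁ ≤ x₂`,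
`∫_{(0,x₁)×(0,∞)} K2(x,y) ω(y) dy ≥ -(1/α)·(1/(1-2α) - 2^{-α})·x₂^{1-2α}`. -/
theorem stmt4 (α : ℝ) (hα : α ∈ Set.Ioo (0 : ℝ) (1/2))
    (ω : ℝ × ℝ → ℝ) (hmeas : Measurable ω)
    (hodd : ∀ y : ℝ × ℝ, 0 < y.2 → ω (-y.1, y.2) = -ω (y.1, y.2))
    (hbd : ∀ y ∈ Dplus, 0 ≤ ω y ∧ ω y ≤ 1)
    (x : ℝ × ℝ) (hx : x ∈ closure Dplus) (hx12 : x.1 ≤ x.2) :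
    ∫ y in Set.Ioo (0 : ℝ) x.1 ×ˢ Set.Ioi (0 : ℝ), K2 α x y * ω y ≥
      -(1 / α * (1 / (1 - 2 * α) - 2 ^ (-α)) * x.2 ^ (1 - 2 * α)) :=
  (stmt4_general ⟨by linarith [hα.1], hα.2⟩ hα.1.ne' hmeas hbd hx hx12).2
end
end

section
/- Let α ∈ (0,1/2). There exists δ ∈ (0,1), depending only on α, with the following property: for every x = (x1,x2) in the closure of D⁺ with x1 ≤ δ and every measurable ω : ℝ×(0,∞) → ℝ which is odd in x1 and satisfies χ_{A(x)} ≤ ω ≤ 1 on D⁺, one has −∫_{(0,∞)×(x2,∞)} K1(x,y) ω(y) dy ≤ −(1/(6·20^α·α))·x1^{1−2α}. -/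
open MeasureTheory

noncomputable section

/-- The triangle `A(x) = {y : x₁ < y₁ < x₁+1, x₂ < y₂ < x₂ + (y₁ - x₁)}`. -/
def Atri (x : ℝ × ℝ) : Set (ℝ × ℝ) :=
  {y : ℝ × ℝ | x.1 < y.1 ∧ y.1 < x.1 + 1 ∧ x.2 < y.2 ∧ y.2 < x.2 + (y.1 - x.1)}

/-!
Up to the reflection in the horizontal axis, `K1 α x` is the field of a dipole: with
`R z = z₂ / |z| ^ (2 + 2 * α)` and `D z = R z - R (z + (2 * x₁, 0))` one has
`K1 α x y = D (y - x) + D (y - (x₁, -x₂))`. Being a difference of two translates of `R`, the dipole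
`D` is integrable on the whole plane, and it is nonnegative on the part of the upper half-plane to
the right of the midpoint of its two poles. Hence the integral of `K1 α x * ω` is at least the
integral of `D` over the triangle `A(0)`. There the vertical integration is explicit and leaves
powers of `s`, `s + 2 * x₁`, ..., whose integral over `s ∈ (0, 1)` is of order `x₁ ^ (1 - 2 * α)`.
-/

lemma nonneg_of_indicator_one_le {X : Type*} {s : Set X} {t : X} {r : ℝ}
    (h : s.indicator (fun _ => (1 : ℝ)) t ≤ r) : 0 ≤ r :=
  (Set.indicator_nonneg (fun _ _ => zero_le_one) t).trans h

lemma cast_finrank_real_prod : (Module.finrank ℝ (ℝ × ℝ) : ℝ) = 2 := by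
  norm_num

lemma sq_norm_le (z : ℝ × ℝ) : ‖z‖ ^ 2 ≤ z.1 ^ 2 + z.2 ^ 2 := by
  rw [← sq_abs z.1, ← sq_abs z.2, Prod.norm_def, Real.norm_eq_abs, Real.norm_eq_abs]
  rcases max_choice |z.1| |z.2| with h | h <;> rw [h]
  · exact le_add_of_nonneg_right (sq_nonneg _)
  · exact le_add_of_nonneg_left (sq_nonneg _)

lemma one_add_norm_div_two_le_norm_add {E : Type*} [SeminormedAddCommGroup E] {z v : E}
    (h : 1 + 2 * ‖v‖ ≤ ‖z‖) : (1 + ‖z‖) / 2 ≤ ‖z + v‖ := by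
  have hsub := norm_sub_norm_le z (-v)
  rw [norm_neg, sub_neg_eq_add] at hsub
  linarith

lemma one_add_norm_sq_div_four_le {z v : ℝ × ℝ} (h : 1 + 2 * ‖v‖ ≤ ‖z‖) :
    (1 + ‖z‖) ^ 2 / 4 ≤ (z.1 + v.1) ^ 2 + (z.2 + v.2) ^ 2 :=
  calc (1 + ‖z‖) ^ 2 / 4 = ((1 + ‖z‖) / 2) ^ 2 := by ring
    _ ≤ ‖z + v‖ ^ 2 := by gcongr; exact one_add_norm_div_two_le_norm_add h
    _ ≤ (z.1 + v.1) ^ 2 + (z.2 + v.2) ^ 2 := sq_norm_le (z + v)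

lemma sq_rpow {a : ℝ} (ha : 0 ≤ a) (r : ℝ) : (a ^ 2) ^ r = a ^ (2 * r) := by
  rw [Real.rpow_mul ha, Real.rpow_two]

lemma abs_rpow_neg_sub_rpow_neg_le {r m u v : ℝ} (hr : 0 ≤ r) (hm : 0 < m) (hu : m ≤ u)
    (hv : m ≤ v) : |u ^ (-r) - v ^ (-r)| ≤ r * m ^ (-r - 1) * |u - v| := by
  refine (convex_Ici m).norm_image_sub_le_of_norm_hasDerivWithin_le (f := fun x => x ^ (-r))
    (f' := fun x => -r * x ^ (-r - 1)) (fun x hx => ?_) (fun x hx => ?_) hv hu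
  · exact (Real.hasDerivAt_rpow_const (Or.inl (hm.trans_le hx).ne')).hasDerivWithinAt
  · rw [norm_mul, norm_neg, Real.norm_of_nonneg hr,
      Real.norm_of_nonneg (Real.rpow_nonneg (hm.le.trans hx) _)]
    exact mul_le_mul_of_nonneg_left (Real.rpow_le_rpow_of_nonpos hm hx (by linarith)) hr

lemma intervalIntegrable_add_rpow {r : ℝ} (hr : -1 < r) (b c d : ℝ) :
    IntervalIntegrable (fun s => (s + c) ^ r) volume b d := by
  simpa using
    (intervalIntegral.intervalIntegrable_rpow' hr (a := b + c) (b := d + c)).comp_add_right c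

lemma integral_add_rpow {r : ℝ} (hr : -1 < r) (b c d : ℝ) :
    ∫ s in b..d, (s + c) ^ r = ((d + c) ^ (r + 1) - (b + c) ^ (r + 1)) / (r + 1) := by
  rw [intervalIntegral.integral_comp_add_right (fun s => s ^ r), integral_rpow (Or.inl hr)]

section RegionBetween

open Set

variable {X E : Type*} {f g : X → ℝ} {s : Set X} {F : X × ℝ → E} [NormedAddCommGroup E]

lemma indicator_regionBetween_apply (t : X) (w : ℝ) :
    (regionBetween f g s).indicator F (t, w)
      = s.indicator (fun t => (Ioo (f t) (g t)).indicator (fun w => F (t, w)) w) t := by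
  by_cases ht : t ∈ s
  · by_cases hw : w ∈ Ioo (f t) (g t) <;> simp_all [regionBetween, indicator]
  · simp_all [regionBetween, indicator]

variable [NormedSpace ℝ E]

lemma integral_indicator_regionBetween_slice (t : X) :
    ∫ w, (regionBetween f g s).indicator F (t, w)
      = s.indicator (fun t => ∫ w in Ioo (f t) (g t), F (t, w)) t := by
  by_cases ht : t ∈ s
  · simp only [indicator_regionBetween_apply, indicator_of_mem ht,
      integral_indicator measurableSet_Ioo]
  · simp only [indicator_regionBetween_apply, indicator_of_notMem ht, integral_zero]

variable [MeasurableSpace X] {μ : Measure X}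

lemma integrableOn_integral_regionBetween (hf : Measurable f) (hg : Measurable g)
    (hs : MeasurableSet s) (hF : IntegrableOn F (regionBetween f g s) (μ.prod volume)) :
    IntegrableOn (fun t => ∫ w in Ioo (f t) (g t), F (t, w)) s μ := by
  rw [← integrable_indicator_iff hs]
  exact (hF.integrable_indicator (measurableSet_regionBetween hf hg hs)).integral_prod_left.congr
    (.of_forall integral_indicator_regionBetween_slice)

lemma setIntegral_regionBetween [SFinite μ] (hf : Measurable f) (hg : Measurable g)
    (hs : MeasurableSet s) (hF : IntegrableOn F (regionBetween f g s) (μ.prod volume)) :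
    ∫ z in regionBetween f g s, F z ∂(μ.prod volume)
      = ∫ t in s, (∫ w in Ioo (f t) (g t), F (t, w)) ∂μ := by
  have hm := measurableSet_regionBetween hf hg hs
  rw [← integral_indicator hm, integral_prod _ (hF.integrable_indicator hm)]
  simp only [integral_indicator_regionBetween_slice, integral_indicator hs]

end RegionBetween

/-- The kernel `z₂ / |z| ^ (2 + 2 * α)`. The Euclidean modulus is written out in coordinates, since
the norm of `ℝ × ℝ` is the sup norm. -/
def rieszKernel (α : ℝ) (z : ℝ × ℝ) : ℝ :=
  z.2 * (z.1 ^ 2 + z.2 ^ 2) ^ (-(1 + α))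

/-- The field of a pole of `rieszKernel` at the origin and an opposite pole at `(-a, 0)`.
The kernel `K1 α x` is the sum of two translates of the dipole with `a = 2 * x.1`. -/
def dipoleKernel (α a : ℝ) (z : ℝ × ℝ) : ℝ :=
  rieszKernel α z - rieszKernel α (z + (a, 0))

lemma measurable_rieszKernel (α : ℝ) : Measurable (rieszKernel α) := by
  unfold rieszKernel
  fun_prop

lemma norm_rieszKernel_le {α : ℝ} (hα : -1 ≤ α) (z : ℝ × ℝ) :
    ‖rieszKernel α z‖ ≤ ‖z‖ ^ (-(1 + 2 * α)) := by
  rcases eq_or_ne z 0 with rfl | hz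
  · simpa [rieszKernel] using Real.rpow_nonneg le_rfl _
  have hz' : 0 < ‖z‖ := norm_pos_iff.2 hz
  calc ‖rieszKernel α z‖ = ‖z.2‖ * (z.1 ^ 2 + z.2 ^ 2) ^ (-(1 + α)) := by
        rw [rieszKernel, norm_mul, Real.norm_of_nonneg (by positivity : 0 ≤ (_ : ℝ) ^ (-(1 + α)))]
    _ ≤ ‖z‖ * (‖z‖ ^ 2) ^ (-(1 + α)) :=
        mul_le_mul (norm_snd_le z)
          (Real.rpow_le_rpow_of_nonpos (by positivity) (sq_norm_le z) (by linarith))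
          (by positivity) (norm_nonneg z)
    _ = ‖z‖ ^ (-(1 + 2 * α)) := by
        rw [sq_rpow hz'.le, show -(1 + 2 * α) = 1 + 2 * -(1 + α) by ring, Real.rpow_add hz',
          Real.rpow_one]

lemma locallyIntegrable_rieszKernel {α : ℝ} (hα : α ∈ Set.Ico (-1) (1 / 2)) :
    LocallyIntegrable (rieszKernel α) :=
  locallyIntegrable_of_norm_le_rpow (C := 1) (α := 1 + 2 * α) (by simp)
    (by rw [cast_finrank_real_prod]; linarith [hα.2])
    (.of_forall fun z => (norm_rieszKernel_le hα.1 z).trans_eq (one_mul _).symm)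
    (measurable_rieszKernel α).aestronglyMeasurable

lemma locallyIntegrable_dipoleKernel {α : ℝ} (hα : α ∈ Set.Ico (-1) (1 / 2)) (a : ℝ) :
    LocallyIntegrable (dipoleKernel α a) := by
  have hR := locallyIntegrable_rieszKernel hα
  refine hR.sub ((locallyIntegrable_map_homeomorph (f := rieszKernel α)
    (Homeomorph.addRight ((a, 0) : ℝ × ℝ))).1 ?_)
  rwa [Homeomorph.coe_addRight, map_add_right_eq_self]

lemma norm_dipoleKernel_le {α a : ℝ} (hα : -1 ≤ α) {z : ℝ × ℝ} (hz : 1 + 2 * |a| ≤ ‖z‖) :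
    ‖dipoleKernel α a z‖
      ≤ 3 * (1 + α) * |a| * 4 ^ (2 + α) * (1 + ‖z‖) ^ (-(2 + 2 * α)) := by
  have hα' : 0 ≤ 1 + α := by linarith
  have ha := abs_nonneg a
  have hN : 0 < 1 + ‖z‖ := by positivity
  have hu : (1 + ‖z‖) ^ 2 / 4 ≤ z.1 ^ 2 + z.2 ^ 2 := by
    simpa using one_add_norm_sq_div_four_le (z := z) (v := 0)
      (by rw [norm_zero]; linarith)
  have hv : (1 + ‖z‖) ^ 2 / 4 ≤ (z.1 + a) ^ 2 + z.2 ^ 2 := by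
    simpa using one_add_norm_sq_div_four_le (z := z) (v := (a, 0)) (by simpa)
  have huv : |z.1 ^ 2 + z.2 ^ 2 - ((z.1 + a) ^ 2 + z.2 ^ 2)| ≤ |a| * (3 * (1 + ‖z‖)) := by
    rw [show z.1 ^ 2 + z.2 ^ 2 - ((z.1 + a) ^ 2 + z.2 ^ 2) = -(a * (2 * z.1 + a)) by ring,
      abs_neg, abs_mul]
    gcongr
    have hz1 : |z.1| ≤ ‖z‖ := norm_fst_le z
    calc |2 * z.1 + a| ≤ 2 * |z.1| + |a| := by
          simpa only [abs_mul, abs_two] using abs_add_le (2 * z.1) a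
      _ ≤ 3 * (1 + ‖z‖) := by linarith
  calc ‖dipoleKernel α a z‖
      = |z.2| * |(z.1 ^ 2 + z.2 ^ 2) ^ (-(1 + α)) - ((z.1 + a) ^ 2 + z.2 ^ 2) ^ (-(1 + α))| := by
        rw [← abs_mul, mul_sub, Real.norm_eq_abs]
        simp only [dipoleKernel, rieszKernel, Prod.fst_add, Prod.snd_add, add_zero]
    _ ≤ (1 + ‖z‖) * ((1 + α) * ((1 + ‖z‖) ^ 2 / 4) ^ (-(1 + α) - 1)
          * (|a| * (3 * (1 + ‖z‖)))) := by
        have hz2 : |z.2| ≤ 1 + ‖z‖ := (norm_snd_le z).trans (by linarith)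
        have := abs_rpow_neg_sub_rpow_neg_le hα' (by positivity) hu hv
        gcongr
        exact this.trans (by gcongr)
    _ = 3 * (1 + α) * |a| * 4 ^ (2 + α) * (1 + ‖z‖) ^ (-(2 + 2 * α)) := by
        rw [show -(1 + α) - 1 = -(2 + α) by ring, show -(2 + 2 * α) = 2 + 2 * -(2 + α) by ring,
          Real.div_rpow (by positivity) (by norm_num), sq_rpow hN.le, Real.rpow_add hN,
          Real.rpow_two, Real.rpow_neg (by norm_num : (0 : ℝ) ≤ 4), div_inv_eq_mul]
        ring

lemma integrable_dipoleKernel {α : ℝ} (hα : α ∈ Set.Ioo 0 (1 / 2)) (a : ℝ) :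
    Integrable (dipoleKernel α a) := by
  have hα' : -1 ≤ α := by linarith [hα.1]
  refine (locallyIntegrable_dipoleKernel ⟨hα', hα.2⟩ a).integrable_of_isBigO_cocompact
    (g := fun z => (1 + ‖z‖) ^ (-(2 + 2 * α))) ?_ ?_
  · refine .of_bound (3 * (1 + α) * |a| * 4 ^ (2 + α)) ?_
    filter_upwards [(tendsto_norm_cocompact_atTop (E := ℝ × ℝ)).eventually_ge_atTop (1 + 2 * |a|)]
      with z hz
    rw [Real.norm_of_nonneg (by positivity : 0 ≤ (1 + ‖z‖) ^ (-(2 + 2 * α)))]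
    exact norm_dipoleKernel_le hα' hz
  · exact (integrable_one_add_norm
      (by rw [cast_finrank_real_prod]; linarith [hα.1])).integrableAtFilter _

lemma dipoleKernel_nonneg {α a : ℝ} (hα : -1 ≤ α) (ha : 0 ≤ a) {z : ℝ × ℝ}
    (hz1 : -a ≤ 2 * z.1) (hz2 : 0 < z.2) : 0 ≤ dipoleKernel α a z := by
  simp only [dipoleKernel, rieszKernel, Prod.fst_add, Prod.snd_add, add_zero, ← mul_sub]
  refine mul_nonneg hz2.le (sub_nonneg.2 ?_)
  exact Real.rpow_le_rpow_of_nonpos (by positivity) (by nlinarith) (by linarith)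

lemma div_edist2_rpow (α c : ℝ) (p q : ℝ × ℝ) :
    c / edist2 p q ^ (2 + 2 * α) = c * ((p.1 - q.1) ^ 2 + (p.2 - q.2) ^ 2) ^ (-(1 + α)) := by
  rw [edist2, Real.sqrt_eq_rpow, ← Real.rpow_mul (by positivity), Real.rpow_neg (by positivity),
    div_eq_mul_inv]
  ring_nf

lemma K1_eq_dipoleKernel_add_dipoleKernel (α : ℝ) (x y : ℝ × ℝ) :
    K1 α x y = dipoleKernel α (2 * x.1) (y - x) + dipoleKernel α (2 * x.1) (y - (x.1, -x.2)) := by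
  simp only [K1, div_edist2_rpow, dipoleKernel, rieszKernel, Prod.fst_add, Prod.snd_add,
    Prod.fst_sub, Prod.snd_sub]
  ring_nf

lemma integrable_K1 {α : ℝ} (hα : α ∈ Set.Ioo 0 (1 / 2)) (x : ℝ × ℝ) : Integrable (K1 α x) := by
  have hD := integrable_dipoleKernel hα (2 * x.1)
  exact ((hD.comp_sub_right x).add (hD.comp_sub_right (x.1, -x.2))).congr
    (.of_forall fun y => (K1_eq_dipoleKernel_add_dipoleKernel α x y).symm)

lemma dipoleKernel_sub_le_K1 {α : ℝ} (hα : -1 ≤ α) {x y : ℝ × ℝ} (hx1 : 0 ≤ x.1)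
    (hy1 : 0 ≤ y.1) (hy2 : -x.2 < y.2) : dipoleKernel α (2 * x.1) (y - x) ≤ K1 α x y := by
  rw [K1_eq_dipoleKernel_add_dipoleKernel]
  refine le_add_of_nonneg_right (dipoleKernel_nonneg hα (by positivity) ?_ ?_)
  · simp only [Prod.fst_sub]
    linarith
  · simp only [Prod.snd_sub]
    linarith

lemma K1_nonneg {α : ℝ} (hα : -1 ≤ α) {x y : ℝ × ℝ} (hx1 : 0 ≤ x.1) (hy1 : 0 ≤ y.1)
    (hy2 : |x.2| < y.2) : 0 ≤ K1 α x y := by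
  refine le_trans (dipoleKernel_nonneg hα (by positivity) ?_ ?_)
    (dipoleKernel_sub_le_K1 hα hx1 hy1 (neg_lt.1 (abs_lt.1 hy2).1))
  · simp only [Prod.fst_sub]
    linarith
  · simpa using (abs_lt.1 hy2).2

lemma Atri_zero_eq_regionBetween : Atri 0 = regionBetween 0 id (Set.Ioo 0 1) := by
  ext z
  simp [Atri, regionBetween, and_assoc]

lemma measurableSet_Atri_zero : MeasurableSet (Atri 0) :=
  Atri_zero_eq_regionBetween ▸
    measurableSet_regionBetween measurable_zero measurable_id measurableSet_Ioo

lemma preimage_sub_Atri_zero (x : ℝ × ℝ) : (fun y => y - x) ⁻¹' Atri 0 = Atri x := by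
  ext y
  simp only [Atri, Set.mem_preimage, Set.mem_ofPred_eq, Prod.fst_sub, Prod.snd_sub, Prod.fst_zero,
    Prod.snd_zero, zero_add, sub_zero, sub_pos, sub_lt_iff_lt_add']

lemma measurableSet_Atri (x : ℝ × ℝ) : MeasurableSet (Atri x) :=
  preimage_sub_Atri_zero x ▸ measurable_id.sub_const x measurableSet_Atri_zero

lemma setIntegral_Atri_comp_sub {E : Type*} [NormedAddCommGroup E] [NormedSpace ℝ E]
    (f : ℝ × ℝ → E) (x : ℝ × ℝ) : ∫ y in Atri x, f (y - x) = ∫ z in Atri 0, f z := by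
  rw [← preimage_sub_Atri_zero x]
  exact (measurePreserving_sub_right volume x).setIntegral_preimage_emb
    (MeasurableEquiv.subRight x).measurableEmbedding f (Atri 0)

lemma Atri_subset_Ioi_prod_Ioi {x : ℝ × ℝ} (hx : 0 ≤ x.1) :
    Atri x ⊆ Set.Ioi 0 ×ˢ Set.Ioi x.2 :=
  fun _ hy => ⟨hx.trans_lt hy.1, hy.2.2.1⟩

lemma hasDerivAt_rieszKernel_primitive {α : ℝ} (hα : α ≠ 0) {s : ℝ} (hs : s ≠ 0) (w : ℝ) :
    HasDerivAt (fun w => -(s ^ 2 + w ^ 2) ^ (-α) / (2 * α)) (rieszKernel α (s, w)) w := by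
  have hpos : s ^ 2 + w ^ 2 ≠ 0 := by positivity
  have h := (((hasDerivAt_pow 2 w).const_add (s ^ 2)).rpow_const (p := -α)
    (Or.inl hpos)).neg.div_const (2 * α)
  refine h.congr_deriv ?_
  rw [rieszKernel, show -(1 + α) = -α - 1 by ring]
  field_simp
  norm_num [mul_comm]

lemma intervalIntegrable_rieszKernel (α : ℝ) {s : ℝ} (hs : s ≠ 0) (b c : ℝ) :
    IntervalIntegrable (fun w => rieszKernel α (s, w)) volume b c := by
  have hpos : ∀ w : ℝ, s ^ 2 + w ^ 2 ≠ 0 := fun w => by positivity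
  exact (continuous_id.mul ((by fun_prop : Continuous fun w : ℝ => s ^ 2 + w ^ 2).rpow_const
    fun w => Or.inl (hpos w))).intervalIntegrable b c

lemma integral_rieszKernel {α : ℝ} (hα : α ≠ 0) {s : ℝ} (hs : s ≠ 0) (b c : ℝ) :
    ∫ w in b..c, rieszKernel α (s, w)
      = ((s ^ 2 + b ^ 2) ^ (-α) - (s ^ 2 + c ^ 2) ^ (-α)) / (2 * α) := by
  rw [intervalIntegral.integral_eq_sub_of_hasDerivAt
    (fun w _ => hasDerivAt_rieszKernel_primitive hα hs w) (intervalIntegrable_rieszKernel α hs b c)]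
  ring

lemma setIntegral_dipoleKernel_slice {α : ℝ} (hα : α ≠ 0) {a s : ℝ} (ha : 0 ≤ a) (hs : 0 < s) :
    ∫ w in Set.Ioo 0 s, dipoleKernel α a (s, w)
      = ((1 - 2 ^ (-α)) * s ^ (-(2 * α)) - (s + a) ^ (-(2 * α))
          + ((s + a) ^ 2 + s ^ 2) ^ (-α)) / (2 * α) := by
  have hsa : 0 < s + a := by positivity
  rw [← integral_Ioc_eq_integral_Ioo, ← intervalIntegral.integral_of_le hs.le]
  simp only [dipoleKernel, Prod.mk_add_mk, add_zero]
  rw [intervalIntegral.integral_sub (intervalIntegrable_rieszKernel α hs.ne' 0 s)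
      (intervalIntegrable_rieszKernel α hsa.ne' 0 s),
    integral_rieszKernel hα hs.ne', integral_rieszKernel hα hsa.ne',
    show s ^ 2 + s ^ 2 = 2 * s ^ 2 by ring, Real.mul_rpow zero_le_two (sq_nonneg s)]
  simp only [zero_pow two_ne_zero, add_zero, sq_rpow hs.le, sq_rpow hsa.le, mul_neg]
  ring

/-- A lower bound, for `0 < s` and `0 ≤ a`, of the integral of `dipoleKernel α a` over the vertical
slice `{s} × (0, s)` of `Atri 0`. It replaces `(s + a) ^ 2 + s ^ 2` by the larger
`2 * (s + 3 / 4 * a) ^ 2`, so that all terms become powers of affine functions of `s`. -/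
def dipoleSliceBound (α a s : ℝ) : ℝ :=
  ((1 - 2 ^ (-α)) * s ^ (-(2 * α)) - (s + a) ^ (-(2 * α))
    + 2 ^ (-α) * (s + 3 / 4 * a) ^ (-(2 * α))) / (2 * α)

lemma dipoleSliceBound_le {α : ℝ} (hα : 0 < α) {a s : ℝ} (ha : 0 ≤ a) (hs : 0 < s) :
    dipoleSliceBound α a s ≤ ∫ w in Set.Ioo 0 s, dipoleKernel α a (s, w) := by
  rw [setIntegral_dipoleKernel_slice hα.ne' ha hs, dipoleSliceBound]
  have hsa : 0 < s + 3 / 4 * a := by positivity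
  have hle : (s + a) ^ 2 + s ^ 2 ≤ 2 * (s + 3 / 4 * a) ^ 2 := by nlinarith [mul_nonneg hs.le ha]
  gcongr
  calc (2 : ℝ) ^ (-α) * (s + 3 / 4 * a) ^ (-(2 * α)) = (2 * (s + 3 / 4 * a) ^ 2) ^ (-α) := by
        rw [Real.mul_rpow zero_le_two (sq_nonneg _), sq_rpow hsa.le, mul_neg]
    _ ≤ ((s + a) ^ 2 + s ^ 2) ^ (-α) :=
        Real.rpow_le_rpow_of_nonpos (by positivity) hle (neg_nonpos.2 hα.le)

lemma intervalIntegrable_dipoleSliceBound {α : ℝ} (hα : α < 1 / 2) (a b c : ℝ) :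
    IntervalIntegrable (dipoleSliceBound α a) volume b c := by
  have hr : -1 < -(2 * α) := by linarith
  exact ((((intervalIntegral.intervalIntegrable_rpow' hr).const_mul _).sub
    (intervalIntegrable_add_rpow hr b a c)).add
    ((intervalIntegrable_add_rpow hr b _ c).const_mul _)).div_const _

lemma integral_dipoleSliceBound {α : ℝ} (hα : α < 1 / 2) (a : ℝ) :
    ∫ s in 0..1, dipoleSliceBound α a s
      = (1 - 2 ^ (-α) - ((1 + a) ^ (1 - 2 * α) - a ^ (1 - 2 * α))
          + 2 ^ (-α) * ((1 + 3 / 4 * a) ^ (1 - 2 * α) - (3 / 4 * a) ^ (1 - 2 * α)))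
        / (2 * α * (1 - 2 * α)) := by
  have hr : -1 < -(2 * α) := by linarith
  have hr1 : -(2 * α) + 1 = 1 - 2 * α := by ring
  have h0 := (intervalIntegral.intervalIntegrable_rpow' hr (a := 0) (b := 1)).const_mul
    (1 - 2 ^ (-α))
  have h1 := intervalIntegrable_add_rpow hr 0 a 1
  have h2 := (intervalIntegrable_add_rpow hr 0 (3 / 4 * a) 1).const_mul (2 ^ (-α))
  simp only [dipoleSliceBound]
  rw [intervalIntegral.integral_div, intervalIntegral.integral_add (h0.sub h1) h2,
    intervalIntegral.integral_sub h0 h1, intervalIntegral.integral_const_mul,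
    intervalIntegral.integral_const_mul, integral_rpow (Or.inl hr), integral_add_rpow hr,
    integral_add_rpow hr, hr1, Real.one_rpow, Real.zero_rpow (by linarith), zero_add, zero_add,
    div_mul_eq_div_div _ (2 * α) (1 - 2 * α)]
  ring

lemma two_rpow_neg_mul_rpow_le {α : ℝ} (hα : 0 ≤ α) :
    (2 : ℝ) ^ (-α) * (3 / 4) ^ (1 - 2 * α) ≤ 3 / 4 := by
  calc (2 : ℝ) ^ (-α) * (3 / 4) ^ (1 - 2 * α)
      = 3 / 4 * (2 * (3 / 4) ^ 2) ^ (-α) := by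
        rw [sub_eq_add_neg, Real.rpow_add (by norm_num), Real.mul_rpow (by norm_num) (by norm_num),
          sq_rpow (by norm_num), Real.rpow_one, mul_neg, mul_left_comm]
    _ ≤ 3 / 4 := mul_le_of_le_one_right (by norm_num)
        (Real.rpow_le_one_of_one_le_of_nonpos (by norm_num) (neg_nonpos.2 hα))

lemma le_integral_dipoleSliceBound {α : ℝ} (hα : α ∈ Set.Ioo 0 (1 / 2)) {a : ℝ} (ha : 0 ≤ a) :
    (a ^ (1 - 2 * α) / 4 - (1 - 2 * α) * a) / (2 * α * (1 - 2 * α))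
      ≤ ∫ s in 0..1, dipoleSliceBound α a s := by
  obtain ⟨hα0, hα1⟩ := hα
  have hβ : 0 < 1 - 2 * α := by linarith
  have hbernoulli : (1 + a) ^ (1 - 2 * α) ≤ 1 + (1 - 2 * α) * a :=
    rpow_one_add_le_one_add_mul_self (by linarith) hβ.le (by linarith)
  have hone : (2 : ℝ) ^ (-α) ≤ 2 ^ (-α) * (1 + 3 / 4 * a) ^ (1 - 2 * α) :=
    le_mul_of_one_le_right (by positivity) (Real.one_le_rpow (by linarith) hβ.le)
  have hscale : (2 : ℝ) ^ (-α) * (3 / 4 * a) ^ (1 - 2 * α) ≤ 3 / 4 * a ^ (1 - 2 * α) := by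
    rw [Real.mul_rpow (by norm_num) ha, ← mul_assoc]
    exact mul_le_mul_of_nonneg_right (two_rpow_neg_mul_rpow_le hα0.le) (by positivity)
  rw [integral_dipoleSliceBound hα1]
  gcongr
  linarith

lemma le_setIntegral_dipoleKernel {α : ℝ} (hα : α ∈ Set.Ioo 0 (1 / 2)) {a : ℝ} (ha : 0 ≤ a) :
    (a ^ (1 - 2 * α) / 4 - (1 - 2 * α) * a) / (2 * α * (1 - 2 * α))
      ≤ ∫ z in Atri 0, dipoleKernel α a z := by
  have hF := (integrable_dipoleKernel hα a).integrableOn (s := regionBetween 0 id (Set.Ioo 0 1))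
  have hbound := (intervalIntegrable_dipoleSliceBound hα.2 a 0 1).1.mono_set Set.Ioo_subset_Ioc_self
  calc (a ^ (1 - 2 * α) / 4 - (1 - 2 * α) * a) / (2 * α * (1 - 2 * α))
      ≤ ∫ s in 0..1, dipoleSliceBound α a s := le_integral_dipoleSliceBound hα ha
    _ = ∫ s in Set.Ioo 0 1, dipoleSliceBound α a s := by
        rw [intervalIntegral.integral_of_le zero_le_one, integral_Ioc_eq_integral_Ioo]
    _ ≤ ∫ s in Set.Ioo 0 1, ∫ w in Set.Ioo 0 s, dipoleKernel α a (s, w) :=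
        setIntegral_mono_on hbound
          (integrableOn_integral_regionBetween measurable_zero measurable_id measurableSet_Ioo hF)
          measurableSet_Ioo fun s hs => dipoleSliceBound_le hα.1 ha hs.1
    _ = ∫ z in Atri 0, dipoleKernel α a z := by
        rw [Atri_zero_eq_regionBetween]
        exact (setIntegral_regionBetween measurable_zero measurable_id measurableSet_Ioo hF).symm

lemma setIntegral_dipoleKernel_le_setIntegral_K1_mul {α : ℝ} (hα : α ∈ Set.Ioo 0 (1 / 2))
    {x : ℝ × ℝ} (hx1 : 0 ≤ x.1) (hx2 : 0 ≤ x.2) {ω : ℝ × ℝ → ℝ}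
    (hint : IntegrableOn (fun y => K1 α x y * ω y) (Set.Ioi 0 ×ˢ Set.Ioi x.2))
    (hω : ∀ y ∈ Set.Ioi (0 : ℝ) ×ˢ Set.Ioi x.2, (Atri x).indicator (fun _ => 1) y ≤ ω y) :
    ∫ z in Atri 0, dipoleKernel α (2 * x.1) z
      ≤ ∫ y in Set.Ioi 0 ×ˢ Set.Ioi x.2, K1 α x y * ω y := by
  have hα' : -1 ≤ α := by linarith [hα.1]
  have hsub := Atri_subset_Ioi_prod_Ioi hx1
  have hK : ∀ y ∈ Set.Ioi (0 : ℝ) ×ˢ Set.Ioi x.2, 0 ≤ K1 α x y := fun y hy =>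
    K1_nonneg hα' hx1 (le_of_lt hy.1) ((abs_of_nonneg hx2).trans_lt hy.2)
  have hω0 : ∀ y ∈ Set.Ioi (0 : ℝ) ×ˢ Set.Ioi x.2, 0 ≤ ω y := fun y hy =>
    nonneg_of_indicator_one_le (hω y hy)
  calc ∫ z in Atri 0, dipoleKernel α (2 * x.1) z
      = ∫ y in Atri x, dipoleKernel α (2 * x.1) (y - x) := (setIntegral_Atri_comp_sub _ x).symm
    _ ≤ ∫ y in Atri x, K1 α x y * ω y := by
        refine setIntegral_mono_on ((integrable_dipoleKernel hα _).comp_sub_right x).integrableOn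
          (hint.mono_set hsub) (measurableSet_Atri x) fun y hy => ?_
        have hyQ := hsub hy
        have hω1 : 1 ≤ ω y := by simpa only [Set.indicator_of_mem hy] using hω y hyQ
        exact (dipoleKernel_sub_le_K1 hα' hx1 (le_of_lt hyQ.1)
          ((neg_nonpos.2 hx2).trans_lt (hx2.trans_lt hyQ.2))).trans
          (le_mul_of_one_le_right (hK y hyQ) hω1)
    _ ≤ ∫ y in Set.Ioi 0 ×ˢ Set.Ioi x.2, K1 α x y * ω y :=
        setIntegral_mono_set hint
          (ae_restrict_of_forall_mem (measurableSet_Ioi.prod measurableSet_Ioi)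
            fun y hy => mul_nonneg (hK y hy) (hω0 y hy))
          hsub.eventuallyLE

lemma integrableOn_K1_mul {α : ℝ} (hα : α ∈ Set.Ioo 0 (1 / 2)) (x : ℝ × ℝ) {s : Set (ℝ × ℝ)}
    (hs : MeasurableSet s) {ω : ℝ × ℝ → ℝ} (hω : Measurable ω) (hω1 : ∀ y ∈ s, |ω y| ≤ 1) :
    IntegrableOn (fun y => K1 α x y * ω y) s :=
  (integrable_K1 hα x).integrableOn.mul_bdd (c := 1) hω.aestronglyMeasurable
    (ae_restrict_of_forall_mem hs hω1)

lemma mem_closure_Dplus {x : ℝ × ℝ} : x ∈ closure Dplus ↔ 0 ≤ x.1 ∧ 0 ≤ x.2 := by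
  rw [Dplus, closure_prod_eq, closure_Ioi, Set.mem_prod, Set.mem_Ici, Set.mem_Ici]

lemma Ioi_prod_Ioi_subset_Dplus {x : ℝ × ℝ} (hx : x ∈ closure Dplus) :
    Set.Ioi 0 ×ˢ Set.Ioi x.2 ⊆ Dplus :=
  Set.prod_mono_right (Set.Ioi_subset_Ioi (mem_closure_Dplus.1 hx).2)

lemma mul_rpow_le_of_mul_rpow_le_one {α h : ℝ} (hα : α ∈ Set.Ioo 0 (1 / 2)) (hh : 0 ≤ h)
    (hsmall : 12 * 20 ^ α * h ^ (2 * α) ≤ 1) :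
    1 / (6 * 20 ^ α * α) * h ^ (1 - 2 * α)
      ≤ ((2 * h) ^ (1 - 2 * α) / 4 - (1 - 2 * α) * (2 * h)) / (2 * α * (1 - 2 * α)) := by
  obtain ⟨hα0, hα1⟩ := hα
  have hβ : 0 < 1 - 2 * α := by linarith
  have hX : 0 ≤ h ^ (1 - 2 * α) := by positivity
  have hsplit : h ^ (1 - 2 * α) * h ^ (2 * α) = h := by
    rw [← Real.rpow_add_of_nonneg hh hβ.le (by positivity), sub_add_cancel, Real.rpow_one]
  have hlinear : h ≤ h ^ (1 - 2 * α) / (12 * 20 ^ α) := by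
    rw [le_div_iff₀ (by positivity)]
    calc h * (12 * 20 ^ α) = h ^ (1 - 2 * α) * (12 * 20 ^ α * h ^ (2 * α)) := by
          rw [mul_left_comm (h ^ (1 - 2 * α)), hsplit, mul_comm]
      _ ≤ h ^ (1 - 2 * α) := mul_le_of_le_one_right hX hsmall
  have hdouble : 2 / 20 ^ α * h ^ (1 - 2 * α) ≤ (2 * h) ^ (1 - 2 * α) := by
    rw [Real.mul_rpow zero_le_two hh, Real.rpow_sub two_pos, Real.rpow_one, ← sq_rpow zero_le_two]
    gcongr
    norm_num
  rw [le_div_iff₀ (by positivity)]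
  calc 1 / (6 * 20 ^ α * α) * h ^ (1 - 2 * α) * (2 * α * (1 - 2 * α))
      = (1 - 2 * α) * (h ^ (1 - 2 * α) / (2 * 20 ^ α))
          - (1 - 2 * α) * (2 * (h ^ (1 - 2 * α) / (12 * 20 ^ α))) := by
        field_simp
        ring
    _ ≤ 1 * (h ^ (1 - 2 * α) / (2 * 20 ^ α)) - (1 - 2 * α) * (2 * h) := by
        gcongr
        linarith
    _ = 2 / 20 ^ α * h ^ (1 - 2 * α) / 4 - (1 - 2 * α) * (2 * h) := by ring
    _ ≤ (2 * h) ^ (1 - 2 * α) / 4 - (1 - 2 * α) * (2 * h) := by gcongr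

theorem stmt5_general {α : ℝ} (hα : α ∈ Set.Ioo 0 (1 / 2)) :
    ∃ δ ∈ Set.Ioo (0 : ℝ) 1, ∀ x ∈ closure Dplus, x.1 ≤ δ → ∀ ω : ℝ × ℝ → ℝ,
      IntegrableOn (fun y => K1 α x y * ω y) (Set.Ioi 0 ×ˢ Set.Ioi x.2) →
      (∀ y ∈ Set.Ioi (0 : ℝ) ×ˢ Set.Ioi x.2, (Atri x).indicator (fun _ => 1) y ≤ ω y) →
      -∫ y in Set.Ioi (0 : ℝ) ×ˢ Set.Ioi x.2, K1 α x y * ω y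
        ≤ -(1 / (6 * 20 ^ α * α)) * x.1 ^ (1 - 2 * α) := by
  have h2α : 0 < 2 * α := mul_pos two_pos hα.1
  have hq : 1 < 12 * (20 : ℝ) ^ α := by
    linarith [Real.one_le_rpow (by norm_num : (1 : ℝ) ≤ 20) hα.1.le]
  refine ⟨(12 * 20 ^ α)⁻¹ ^ (2 * α)⁻¹,
    ⟨by positivity, Real.rpow_lt_one (by positivity) (inv_lt_one_of_one_lt₀ hq) (by positivity)⟩,
    fun x hx hxδ ω hint hω => ?_⟩
  obtain ⟨hx1, hx2⟩ := mem_closure_Dplus.1 hx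
  have hsmall : 12 * 20 ^ α * x.1 ^ (2 * α) ≤ 1 := by
    rw [Real.le_rpow_inv_iff_of_pos hx1 (by positivity) h2α] at hxδ
    exact (le_inv_mul_iff₀ (by positivity)).1 (hxδ.trans_eq (mul_one _).symm)
  rw [neg_mul, neg_le_neg_iff]
  calc 1 / (6 * 20 ^ α * α) * x.1 ^ (1 - 2 * α)
      ≤ ((2 * x.1) ^ (1 - 2 * α) / 4 - (1 - 2 * α) * (2 * x.1)) / (2 * α * (1 - 2 * α)) :=
        mul_rpow_le_of_mul_rpow_le_one hα hx1 hsmall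
    _ ≤ ∫ z in Atri 0, dipoleKernel α (2 * x.1) z :=
        le_setIntegral_dipoleKernel hα (by positivity)
    _ ≤ ∫ y in Set.Ioi 0 ×ˢ Set.Ioi x.2, K1 α x y * ω y :=
        setIntegral_dipoleKernel_le_setIntegral_K1_mul hα hx1 hx2 hint hω

/-- For `α ∈ (0,1/2)` there is `δ ∈ (0,1)`, depending only on `α`, such that
for every `x` in the closure of `D⁺` with `x₁ ≤ δ` and every measurable `ω`, odd in `x₁`,
with `χ_{A(x)} ≤ ω ≤ 1` on `D⁺`:
`-∫_{(0,∞)×(x₂,∞)} K1(x,y) ω(y) dy ≤ -(1/(6·20^α·α))·x₁^{1-2α}`. -/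
theorem stmt5 (α : ℝ) (hα : α ∈ Set.Ioo (0 : ℝ) (1/2)) :
    ∃ δ ∈ Set.Ioo (0 : ℝ) 1,
      ∀ x : ℝ × ℝ, x ∈ closure Dplus → x.1 ≤ δ →
      ∀ ω : ℝ × ℝ → ℝ, Measurable ω →
        (∀ y : ℝ × ℝ, 0 < y.2 → ω (-y.1, y.2) = -ω (y.1, y.2)) →
        (∀ y ∈ Dplus, (Atri x).indicator (fun _ => (1 : ℝ)) y ≤ ω y ∧ ω y ≤ 1) →
        -∫ y in Set.Ioi (0 : ℝ) ×ˢ Set.Ioi x.2, K1 α x y * ω y ≤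
          -(1 / (6 * 20 ^ α * α)) * x.1 ^ (1 - 2 * α) := by
  obtain ⟨δ, hδ, hbound⟩ := stmt5_general hα
  refine ⟨δ, hδ, fun x hx hxδ ω hmeas _ hω => ?_⟩
  replace hω := fun y hy => hω y (Ioi_prod_Ioi_subset_Dplus hx hy)
  exact hbound x hx hxδ ω (integrableOn_K1_mul hα x (measurableSet_Ioi.prod measurableSet_Ioi) hmeas
    fun y hy => (abs_of_nonneg (nonneg_of_indicator_one_le (hω y hy).1)).trans_le (hω y hy).2)
    fun y hy => (hω y hy).1
end
end
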